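/- Let (𝔩,𝔪) be a permissible pair with the algorithm notations in place. Let i ∈ J and i' ∈ I be indices such that e(Δ_i) = e(Δ_{i'}) and b(Δ_{i'}) ≤ b(Δ_{i^∨}). Then 𝔡(i') = 𝔡(i). -/

import Mathlib

/-!
Put `t = 𝔡(j)`. Since `e(Δ_{i'}) = e(Δ_j)` and ends decrease strictly along the ladder,
`𝔡(i') ≤ 𝔡'(i') ≤ t`. Suppose `𝔡(i') < t`. The index `j^∨` lies in the fiber `𝔡⁻¹(t)`, and every
segment of that fiber begins no later than `Δ_j`; hence `b(Δ_{i'}) ≤ b(Δ_j)`.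

The function `𝔡` satisfies `𝔡(i) = 𝔡'(i)`, or `𝔡(i) + 1 = 𝔡(i₂)` for some `Δ_{i₂} ≪ Δ_i`
(`exists_succ_depth`). As `𝔡' ≥ t` on every segment that begins and ends no later than `Δ_j`, the
second case persists as one descends from `i'`, until an index `i''` with `𝔡(i'') = t` and
`Δ_{i''} ≪ Δ_{i'}` is reached (`exists_fiber_ll`).

Now `e(Δ_{i''}) < e(Δ_j)`. Iterating `σ⁻¹` from `j` runs through the fiber in increasing order
(`fiber_orbit`), so the end point has changed by the time `i''` is reached. Therefore `j^∨` is
an index of `I` with `j^∨ ≤ i''`, which gives `b(Δ_{j^∨}) ≤ b(Δ_{i''}) < b(Δ_{i'})`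
(`begin_vee_le`), contrary to the hypothesis on `i'`.
-/

/-- A *segment* `Δ(a,b)`: a pair of integers `a ≤ b`.  `b` is the begin point
and `e` the end point. -/
structure Segment where
  b : ℤ
  e : ℤ
  le : b ≤ e

namespace Segment

/-- `Δ₁ ≪ Δ₂` : `b(Δ₁) < b(Δ₂)` and `e(Δ₁) < e(Δ₂)`. -/
def ll (Δ₁ Δ₂ : Segment) : Prop := Δ₁.b < Δ₂.b ∧ Δ₁.e < Δ₂.e

/-- `Δ₁ ≺ Δ₂` : `b(Δ₁) < b(Δ₂)`, `e(Δ₁) < e(Δ₂)` and `e(Δ₁) ≥ b(Δ₂) - 1`. -/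
def prec (Δ₁ Δ₂ : Segment) : Prop := Δ₁.b < Δ₂.b ∧ Δ₁.e < Δ₂.e ∧ Δ₂.b - 1 ≤ Δ₁.e

/-- `⁻Δ = Δ(a-1, b-1)`. -/
def shiftDown (Δ : Segment) : Segment := ⟨Δ.b - 1, Δ.e - 1, by have := Δ.le; omega⟩

end Segment

/-- The standing data of the inverse Knuth–Viennot algorithm: a nonzero multisegment
`𝔪 = Σ_{i ∈ I} Δ_i` indexed by `I = Fin n` (linearly ordered compatibly with begin
points, ties broken by reversed end points), and a ladder multisegment
`𝔩 = Σ_{t ∈ J} Δ_{j_t}` indexed by `J = Fin l` (`jseg t` is the segment `Δ_{j_{t+1}}`,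
enumerated so that `Δ_{j_l} ≪ ⋯ ≪ Δ_{j_1}`), such that the pair `(𝔩, 𝔪)` is
permissible. -/
structure KVData where
  n : ℕ
  l : ℕ
  npos : 0 < n
  lpos : 0 < l
  iseg : Fin n → Segment
  jseg : Fin l → Segment
  iOrder : ∀ i₁ i₂ : Fin n, i₂ < i₁ →
    (iseg i₂).b < (iseg i₁).b ∨ ((iseg i₂).b = (iseg i₁).b ∧ (iseg i₁).e ≤ (iseg i₂).e)
  ladder : ∀ t t' : Fin l, t < t' → Segment.ll (jseg t') (jseg t)
  permissible : ∀ (m : ℕ) (c : Fin m → Fin n),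
    (∀ r s : Fin m, r < s → Segment.ll (iseg (c s)) (iseg (c r))) →
    ∃ φ : Fin m → Fin l, StrictMono φ ∧
      ∀ t : Fin m, Segment.prec (Segment.shiftDown (iseg (c t))) (jseg (φ t))

namespace KVData

variable (D : KVData)

/-- The segment attached to an index in `I ⊔ J`. -/
def segOf : Fin D.n ⊕ Fin D.l → Segment := Sum.elim D.iseg D.jseg

/-- The set `{t : ⁻Δ_i ≪ Δ_{j_t}}` (0-based positions in the ladder `𝔩`). -/
def dPrimeSet (i : Fin D.n) : Set ℕ :=
  {t : ℕ | ∃ h : t < D.l, Segment.ll (Segment.shiftDown (D.iseg i)) (D.jseg ⟨t, h⟩)}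

/-- The set `{𝔡'(i_k) - k : i = i_0, Δ_{i_{r+1}} ≪ Δ_{i_r}}` whose minimum is `𝔡(i)`. -/
def depthSet (d' : Fin D.n → ℕ) (i : Fin D.n) : Set ℤ :=
  {z : ℤ | ∃ (k : ℕ) (c : ℕ → Fin D.n), c 0 = i ∧
    (∀ r < k, Segment.ll (D.iseg (c (r + 1))) (D.iseg (c r))) ∧
    z = (d' (c k) : ℤ) - (k : ℤ)}

/-- `d'` is the function `𝔡'` and `d` the depth function `𝔡` on `I ⊔ J`
(`𝔡'(i) = max{t : ⁻Δ_i ≪ Δ_{j_t}}`, `𝔡(i) = min{𝔡'(i_k) - k}`, `𝔡(j_t) = t`). -/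
def DepthSpec (d' : Fin D.n → ℕ) (d : Fin D.n ⊕ Fin D.l → ℤ) : Prop :=
  (∀ i, IsGreatest (D.dPrimeSet i) (d' i)) ∧
  (∀ i, IsLeast (D.depthSet d' i) (d (Sum.inl i))) ∧
  (∀ t : Fin D.l, d (Sum.inr t) = (t : ℤ))

/-- `σ` is the permutation of `I ⊔ J` whose disjoint cycles are `(i_1, …, i_s, j_t)`
where `{i_1 > … > i_s} ∪ {j_t} = 𝔡⁻¹(t)`:  an element `i ∈ I` is sent to the largest
element of `I` below it in its fiber of `𝔡`, or to the `J`-element of the fiber if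
there is none; the `J`-element of a fiber is sent to the largest `I`-element of the
fiber, or to itself if there is none. -/
def SigmaSpec (d : Fin D.n ⊕ Fin D.l → ℤ) (σ : Equiv.Perm (Fin D.n ⊕ Fin D.l)) : Prop :=
  (∀ i : Fin D.n,
    (∃ i' : Fin D.n,
        IsGreatest {i'' : Fin D.n | i'' < i ∧ d (Sum.inl i'') = d (Sum.inl i)} i' ∧
        σ (Sum.inl i) = Sum.inl i')
    ∨ ((¬ ∃ i'' : Fin D.n, i'' < i ∧ d (Sum.inl i'') = d (Sum.inl i)) ∧
        ∃ t : Fin D.l, (t : ℤ) = d (Sum.inl i) ∧ σ (Sum.inl i) = Sum.inr t)) ∧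
  (∀ t : Fin D.l,
    (∃ i : Fin D.n,
        IsGreatest {i' : Fin D.n | d (Sum.inl i') = (t : ℤ)} i ∧
        σ (Sum.inr t) = Sum.inl i)
    ∨ ((¬ ∃ i : Fin D.n, d (Sum.inl i) = (t : ℤ)) ∧ σ (Sum.inr t) = Sum.inr t))

/-- `e(Δ♣_x) ≠ e(Δ_x)`, i.e. the end point changes at `x`
(recall `Δ♣_x = Δ(b(Δ_x), e(Δ_{σ(x)}))`). -/
def breaksEnd (σ : Equiv.Perm (Fin D.n ⊕ Fin D.l)) (x : Fin D.n ⊕ Fin D.l) : Prop :=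
  (D.segOf (σ x)).e ≠ (D.segOf x).e

/-- `vee` is the map `x ↦ x^∨`:  `x^∨ = σ^{-r}(x)` for the least `r ≥ 1` such that
`e(Δ♣_{σ^{-r}(x)}) ≠ e(Δ_{σ^{-r}(x)})`, and `x^∨ = j_{𝔡(x)}` if no such `r` exists. -/
def VeeSpec (d : Fin D.n ⊕ Fin D.l → ℤ) (σ : Equiv.Perm (Fin D.n ⊕ Fin D.l))
    (vee : Fin D.n ⊕ Fin D.l → Fin D.n ⊕ Fin D.l) : Prop :=
  ∀ x : Fin D.n ⊕ Fin D.l,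
    ((∃ r : ℕ, 1 ≤ r ∧ D.breaksEnd σ ((⇑σ.symm)^[r] x)) →
      ∃ r : ℕ, 1 ≤ r ∧ vee x = (⇑σ.symm)^[r] x ∧ D.breaksEnd σ ((⇑σ.symm)^[r] x) ∧
        ∀ r' : ℕ, 1 ≤ r' → r' < r → ¬ D.breaksEnd σ ((⇑σ.symm)^[r'] x)) ∧
    ((¬ ∃ r : ℕ, 1 ≤ r ∧ D.breaksEnd σ ((⇑σ.symm)^[r] x)) →
      ∃ t : Fin D.l, (t : ℤ) = d x ∧ vee x = Sum.inr t)

/-- The multisegment `𝔪` of the data. -/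
def mSeg : Multiset Segment := Multiset.map D.iseg Finset.univ.val

/-- The ladder multisegment `𝔩` of the data. -/
def lSeg : Multiset Segment := Multiset.map D.jseg Finset.univ.val

end KVData

namespace KVData

variable {D : KVData} {d' : Fin D.n → ℕ} {d : Fin D.n ⊕ Fin D.l → ℤ}
  {σ : Equiv.Perm (Fin D.n ⊕ Fin D.l)}

theorem depth_le_dPrime (h : D.DepthSpec d' d) (i : Fin D.n) : d (Sum.inl i) ≤ d' i :=
  (h.2.1 i).2 ⟨0, fun _ => i, rfl, by simp, by simp⟩

theorem le_dPrime (h : D.DepthSpec d' d) {i : Fin D.n} {t : Fin D.l}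
    (hb : (D.iseg i).b ≤ (D.jseg t).b) (he : (D.iseg i).e ≤ (D.jseg t).e) : (t : ℕ) ≤ d' i :=
  (h.1 i).2 ⟨t.2, by simp only [Segment.shiftDown, Segment.ll, Fin.eta]; omega⟩

/-- The converse of `le_dPrime`: the set defining `𝔡'` is closed downwards, by the ladder
condition. -/
theorem bounds_of_le_dPrime (h : D.DepthSpec d' d) {i : Fin D.n} {t : Fin D.l}
    (ht : (t : ℕ) ≤ d' i) :
    (D.iseg i).b ≤ (D.jseg t).b ∧ (D.iseg i).e ≤ (D.jseg t).e := by
  obtain ⟨hl, hll⟩ := (h.1 i).1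
  simp only [Segment.shiftDown, Segment.ll] at hll
  rcases ht.lt_or_eq with hlt | heq
  · have := D.ladder t ⟨d' i, hl⟩ hlt
    simp only [Segment.ll] at this
    omega
  · have : t = ⟨d' i, hl⟩ := Fin.ext heq
    rw [this]
    omega

/-- The recursion satisfied by `𝔡`: the value `𝔡(i)` is attained either by the trivial chain, or
by a chain whose second member has depth `𝔡(i) + 1`. -/
theorem exists_succ_depth (h : D.DepthSpec d' d) (i : Fin D.n) :
    d (Sum.inl i) = d' i ∨
      ∃ i₂, Segment.ll (D.iseg i₂) (D.iseg i) ∧ d (Sum.inl i₂) = d (Sum.inl i) + 1 := by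
  obtain ⟨k, c, hc0, hc, hz⟩ := (h.2.1 i).1
  rcases k with _ | k
  · left
    rw [hz, hc0]
    simp
  · right
    have hll : Segment.ll (D.iseg (c 1)) (D.iseg i) := hc0 ▸ hc 0 (by omega)
    refine ⟨c 1, hll, le_antisymm ?_ ?_⟩
    · refine (h.2.1 (c 1)).2 ⟨k, fun r => c (r + 1), rfl, fun r hr => hc (r + 1) (by omega), ?_⟩
      rw [hz]
      push_cast
      ring
    · obtain ⟨k₂, c₂, hc₂0, hc₂, hz₂⟩ := (h.2.1 (c 1)).1
      have : d (Sum.inl i) ≤ (d' (c₂ k₂) : ℤ) - ((k₂ + 1 : ℕ) : ℤ) := by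
        refine (h.2.1 i).2 ⟨k₂ + 1, fun r => Nat.casesOn r i c₂, rfl, fun r hr => ?_, rfl⟩
        rcases r with _ | r
        · simpa [hc₂0] using hll
        · exact hc₂ r (by omega)
      rw [hz₂]
      push_cast at this
      linarith

/-- An index whose segment begins and ends no later than `Δ_{j_t}`, but whose depth is less
than `t`, has an index of depth exactly `t` below it. -/
theorem exists_fiber_ll (h : D.DepthSpec d' d) (t : Fin D.l) (m : ℕ) :
    ∀ i : Fin D.n, d (Sum.inl i) + (m + 1) = t → (D.iseg i).b ≤ (D.jseg t).b →
      (D.iseg i).e ≤ (D.jseg t).e →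
      ∃ i₂, Segment.ll (D.iseg i₂) (D.iseg i) ∧ d (Sum.inl i₂) = t := by
  induction m with
  | zero =>
    intro i hd hb he
    have := le_dPrime h hb he
    rcases exists_succ_depth h i with h1 | ⟨i₂, hll, h2⟩
    · omega
    · exact ⟨i₂, hll, by push_cast at hd; omega⟩
  | succ m ih =>
    intro i hd hb he
    have := le_dPrime h hb he
    rcases exists_succ_depth h i with h1 | ⟨i₂, hll, h2⟩
    · omega
    · simp only [Segment.ll] at hll
      obtain ⟨i₃, hll₃, h3⟩ := ih i₂ (by push_cast at hd; omega) (by omega) (by omega)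
      simp only [Segment.ll] at hll₃ ⊢
      exact ⟨i₃, by omega, h3⟩

theorem depth_sigma (h : D.DepthSpec d' d) (hσ : D.SigmaSpec d σ) (x : Fin D.n ⊕ Fin D.l) :
    d (σ x) = d x := by
  rcases x with i | t
  · rcases hσ.1 i with ⟨i₂, hg, hi⟩ | ⟨-, t, ht, hi⟩
    · rw [hi]
      exact hg.1.2
    · rw [hi, h.2.2, ht]
  · rcases hσ.2 t with ⟨i, hg, hi⟩ | ⟨-, hi⟩
    · rw [hi, h.2.2]
      exact hg.1
    · rw [hi]

theorem depth_sigma_symm_iterate (h : D.DepthSpec d' d) (hσ : D.SigmaSpec d σ) (r : ℕ)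
    (x : Fin D.n ⊕ Fin D.l) : d ((⇑σ.symm)^[r] x) = d x := by
  induction r with
  | zero => rfl
  | succ r ih =>
    rw [Function.iterate_succ_apply', ← ih, ← depth_sigma h hσ (σ.symm _), Equiv.apply_symm_apply]

/-- Iterating `σ⁻¹` from `j_t` reaches every `i ∈ I` of depth `t`, and visits only indices of `I`
that are at most `i` on the way. -/
theorem fiber_orbit (hσ : D.SigmaSpec d σ) (t : Fin D.l) (i : Fin D.n) :
    d (Sum.inl i) = t → ∃ p : ℕ, (⇑σ.symm)^[p] (Sum.inr t) = Sum.inl i ∧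
      ∀ q, 1 ≤ q → q ≤ p → ∃ i₂, i₂ ≤ i ∧ (⇑σ.symm)^[q] (Sum.inr t) = Sum.inl i₂ := by
  induction i using WellFoundedLT.induction with
  | ind i ih =>
  intro hd
  rcases hσ.1 i with ⟨i₂, ⟨⟨hlt, hd₂⟩, -⟩, hi⟩ | ⟨-, t', ht, hi⟩
  · obtain ⟨p, hp, hq⟩ := ih i₂ hlt (hd₂.trans hd)
    have hp' : (⇑σ.symm)^[p + 1] (Sum.inr t) = Sum.inl i := by
      rw [Function.iterate_succ_apply', hp, ← hi, Equiv.symm_apply_apply]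
    refine ⟨p + 1, hp', fun q h1 h2 => ?_⟩
    rcases h2.lt_or_eq with h3 | rfl
    · obtain ⟨i₃, hle, h4⟩ := hq q h1 (by omega)
      exact ⟨i₃, hle.trans hlt.le, h4⟩
    · exact ⟨i, le_rfl, hp'⟩
  · obtain rfl : t' = t := Fin.ext (by omega)
    have hp' : (⇑σ.symm)^[1] (Sum.inr t') = Sum.inl i := by
      rw [Function.iterate_one, ← hi, Equiv.symm_apply_apply]
    refine ⟨1, hp', fun q h1 h2 => ?_⟩
    obtain rfl : q = 1 := by omega
    exact ⟨i, le_rfl, hp'⟩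

theorem end_iterate_eq (x : Fin D.n ⊕ Fin D.l) (p : ℕ)
    (hp : ∀ q, 1 ≤ q → q ≤ p → ¬ D.breaksEnd σ ((⇑σ.symm)^[q] x)) :
    (D.segOf ((⇑σ.symm)^[p] x)).e = (D.segOf x).e := by
  induction p with
  | zero => rfl
  | succ p ih =>
    have h1 := hp (p + 1) (by omega) le_rfl
    rw [breaksEnd, not_not, Function.iterate_succ_apply', Equiv.apply_symm_apply] at h1
    rw [Function.iterate_succ_apply', ← h1]
    exact ih fun q h2 h3 => hp q h2 (by omega)

theorem begin_mono (D : KVData) {i i₂ : Fin D.n} (h : i₂ ≤ i) : (D.iseg i₂).b ≤ (D.iseg i).b := by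
  rcases h.lt_or_eq with h | rfl
  · have := D.iOrder i i₂ h
    omega
  · exact le_rfl

variable {vee : Fin D.n ⊕ Fin D.l → Fin D.n ⊕ Fin D.l}

/-- In the fiber of `j`, an index whose end differs from that of `Δ_j` comes at or after `j^∨`. -/
theorem begin_vee_le (hσ : D.SigmaSpec d σ) (hvee : D.VeeSpec d σ vee) (j : Fin D.l)
    (i : Fin D.n) (hd : d (Sum.inl i) = j) (he : (D.iseg i).e ≠ (D.jseg j).e) :
    (D.segOf (vee (Sum.inr j))).b ≤ (D.iseg i).b := by
  obtain ⟨p, hp, hq⟩ := fiber_orbit hσ j i hd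
  have hex : ∃ q, 1 ≤ q ∧ q ≤ p ∧ D.breaksEnd σ ((⇑σ.symm)^[q] (Sum.inr j)) := by
    by_contra! hno
    have := end_iterate_eq (σ := σ) (Sum.inr j) p hno
    rw [hp] at this
    exact he this
  obtain ⟨q, hq1, hqp, hbr⟩ := hex
  obtain ⟨r, hr1, hv, -, hmin⟩ := (hvee (Sum.inr j)).1 ⟨q, hq1, hbr⟩
  have hrq : r ≤ q := by
    by_contra! hlt
    exact hmin q hq1 hlt hbr
  obtain ⟨i₂, hle, hi₂⟩ := hq r hr1 (hrq.trans hqp)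
  rw [hv, hi₂]
  exact D.begin_mono hle

theorem begin_vee_le_ladder (h : D.DepthSpec d' d) (hσ : D.SigmaSpec d σ)
    (hvee : D.VeeSpec d σ vee) (j : Fin D.l) :
    (D.segOf (vee (Sum.inr j))).b ≤ (D.jseg j).b := by
  have hd : d (vee (Sum.inr j)) = j := by
    by_cases hex : ∃ r : ℕ, 1 ≤ r ∧ D.breaksEnd σ ((⇑σ.symm)^[r] (Sum.inr j))
    · obtain ⟨r, -, hv, -⟩ := (hvee (Sum.inr j)).1 hex
      rw [hv, depth_sigma_symm_iterate h hσ, h.2.2]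
    · obtain ⟨t, ht, hv⟩ := (hvee (Sum.inr j)).2 hex
      rw [hv, h.2.2, ht, h.2.2]
  generalize vee (Sum.inr j) = v at hd
  rcases v with i | t
  · have := depth_le_dPrime h i
    exact (bounds_of_le_dPrime h (by omega)).1
  · rw [h.2.2] at hd
    obtain rfl : t = j := Fin.ext (by omega)
    exact le_rfl

end KVData

/-- Lemma `lem:import`(2).  Let `(𝔩,𝔪)` be a permissible pair with the
algorithm notations in place.  Let `j ∈ J` and `i' ∈ I` be indices such that
`e(Δ_j) = e(Δ_{i'})` and `b(Δ_{i'}) ≤ b(Δ_{j^∨})`.  Then `𝔡(i') = 𝔡(j)`. -/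
theorem import_lemma_part2 (D : KVData) (d' : Fin D.n → ℕ)
    (d : Fin D.n ⊕ Fin D.l → ℤ) (σ : Equiv.Perm (Fin D.n ⊕ Fin D.l))
    (vee : Fin D.n ⊕ Fin D.l → Fin D.n ⊕ Fin D.l)
    (hdep : D.DepthSpec d' d) (hσ : D.SigmaSpec d σ) (hvee : D.VeeSpec d σ vee)
    (j : Fin D.l) (i' : Fin D.n)
    (he : (D.jseg j).e = (D.iseg i').e)
    (hb : (D.iseg i').b ≤ (D.segOf (vee (Sum.inr j))).b) :
    d (Sum.inl i') = d (Sum.inr j) := by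
  rw [hdep.2.2]
  have hle := KVData.depth_le_dPrime hdep i'
  have hbj := hb.trans (KVData.begin_vee_le_ladder hdep hσ hvee j)
  -- The ends along the ladder decrease strictly, so `𝔡'(i')` cannot exceed `j`.
  have hd' : d' i' ≤ j := by
    by_contra! hlt
    obtain ⟨hl, hll⟩ := (hdep.1 i').1
    have := D.ladder j ⟨d' i', hl⟩ hlt
    simp only [Segment.shiftDown, Segment.ll] at hll this
    omega
  by_contra hne
  obtain ⟨m, hm⟩ : ∃ m : ℕ, d (Sum.inl i') + (m + 1) = j :=
    ⟨((j : ℤ) - d (Sum.inl i') - 1).toNat, by omega⟩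
  obtain ⟨i₂, hll, hd₂⟩ := KVData.exists_fiber_ll hdep j m i' hm hbj he.ge
  simp only [Segment.ll] at hll
  have := KVData.begin_vee_le hσ hvee j i₂ hd₂ (by omega)
  omega
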